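/- arXiv:math/0202214 — 2 statements merged into one kernel-verified Lean document; each statement's English description precedes it below -/
import Mathlib

section
/- There exists a non-singular n(n−1)/2 × n(n−1)/2 matrix J over ℤ[t^{±1}, q^{±1}] such that for every n-braid β, the Lawrence–Krammer matrix M = K(β) satisfies M J M* = J, where M* is the transpose of M with t, q replaced by t^{−1}, q^{−1}. (The Lawrence–Krammer representation is unitary.) -/
open Matrix

noncomputable section

/-- Braid relations among the Artin generators `σ_1, …, σ_{n-1}`
(indexed here by `Fin (n-1)`, with `i : Fin (n-1)` standing for `σ_{i+1}`). -/
def braidRels (n : ℕ) : Set (FreeGroup (Fin (n - 1))) :=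
  {r | (∃ i j : Fin (n - 1), (i : ℕ) + 1 = (j : ℕ) ∧
          r = .of i * .of j * .of i * (.of j * .of i * .of j)⁻¹) ∨
       (∃ i j : Fin (n - 1), (i : ℕ) + 2 ≤ (j : ℕ) ∧
          r = .of i * .of j * (.of j * .of i)⁻¹)}

/-- The braid group `B_n` as a presented group. -/
abbrev Braid (n : ℕ) := PresentedGroup (braidRels n)

/-- The Artin generator `σ_{i+1}` of `B_n`. -/
def σg {n : ℕ} (i : Fin (n - 1)) : Braid n := PresentedGroup.of i

/-- Index set `{(i,j) : 1 ≤ i < j ≤ n}` for the Lawrence–Krammer basis `X_{i,j}`. -/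
abbrev BP (n : ℕ) := {p : Fin (n + 1) × Fin (n + 1) // 0 < (p.1 : ℕ) ∧ (p.1 : ℕ) < (p.2 : ℕ)}

/-- The standard basis row vector `X_{a,b}`. -/
def ee {R : Type*} [CommRing R] (n a b : ℕ) : BP n → R :=
  fun c => if (c.val.1 : ℕ) = a ∧ (c.val.2 : ℕ) = b then 1 else 0

/-- The Lawrence–Krammer matrix of the Artin generator `σ_m` (1-based `m`),
with parameters `t`, `q`; row `(i,j)` is the expansion of `X_{i,j}·σ_m` in the basis. -/
def LKgen {R : Type*} [CommRing R] (t q : R) (n m : ℕ) : Matrix (BP n) (BP n) R :=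
  fun r c =>
    let i := (r.val.1 : ℕ); let j := (r.val.2 : ℕ)
    if m = i ∧ j = i + 1 then -(t * q ^ 2) * ee n i j c
    else if m = i then
      q * ee n (i + 1) j c + (1 - q) * ee n i j c + t * q * (1 - q) * ee n i (i + 1) c
    else if m = j then
      q * ee n i (j + 1) c + (1 - q) * ee n i j c - q * (1 - q) * ee n j (j + 1) c
    else if m + 1 = i then ee n (i - 1) j c
    else if m + 1 = j then ee n i (j - 1) c
    else ee n i j c

/-- The field `ℚ(t,q)` of rational functions in two variables. -/
abbrev F2 := FractionRing (MvPolynomial (Fin 2) ℚ)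

/-- The variable `t` in `ℚ(t,q)`. -/
def tt : F2 := algebraMap (MvPolynomial (Fin 2) ℚ) F2 (MvPolynomial.X 0)

/-- The variable `q` in `ℚ(t,q)`. -/
def qq : F2 := algebraMap (MvPolynomial (Fin 2) ℚ) F2 (MvPolynomial.X 1)

/-- The entry of the invariant form in row `(i, j)` and column `(k, l)`. -/
def lkForm {R : Type*} [CommRing R] (t q : R) (i j k l : ℕ) : R :=
  if i = k ∧ j = l then (q * t - 1) * (1 + q ^ 2 * t)
  else if (i = k ∧ j < l) ∨ (i < k ∧ j = l) then q - 1
  else if (i = k ∧ l < j) ∨ (k < i ∧ j = l) then q ^ 2 * t ^ 2 * (q - 1)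
  else if j = k then -(q ^ 2 * t * (q - 1))
  else if i = l then -(t * (q - 1))
  else if i < k ∧ k < j ∧ j < l then -((q - 1) ^ 2 * (1 + q * t))
  else if k < i ∧ i < l ∧ l < j then t * (q - 1) ^ 2 * (1 + q * t)
  else 0

/-- The value of the linear form `X_{a,b} ↦ f a b` on `X_{i,j} σ_m`. -/
def lkAct {R : Type*} [CommRing R] (t q : R) (m i j : ℕ) (f : ℕ → ℕ → R) : R :=
  if m = i ∧ j = i + 1 then -(t * q ^ 2) * f i j
  else if m = i then q * f (i + 1) j + (1 - q) * f i j + t * q * (1 - q) * f i (i + 1)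
  else if m = j then q * f i (j + 1) + (1 - q) * f i j - q * (1 - q) * f j (j + 1)
  else if m + 1 = i then f (i - 1) j
  else if m + 1 = j then f i (j - 1)
  else f i j

section lkAct

variable {R : Type*} [CommRing R] (t q : R) {m i j : ℕ} (f : ℕ → ℕ → R)

theorem lkAct_of_eq_of_eq (hi : i = m) (hj : j = m + 1) :
    lkAct t q m i j f = -(t * q ^ 2) * f m (m + 1) := by
  subst hi hj; simp [lkAct]

theorem lkAct_of_eq_left (hi : i = m) (hj : m + 1 < j) :
    lkAct t q m i j f =
      q * f (m + 1) j + (1 - q) * f m j + t * q * (1 - q) * f m (m + 1) := by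
  rw [lkAct, if_neg (by omega), if_pos hi.symm, hi]

theorem lkAct_of_eq_right (hi : i < m) (hj : j = m) :
    lkAct t q m i j f =
      q * f i (m + 1) + (1 - q) * f i m - q * (1 - q) * f m (m + 1) := by
  rw [lkAct, if_neg (by omega), if_neg (by omega), if_pos hj.symm, hj]

theorem lkAct_of_eq_succ_left (hi : i = m + 1) (hj : m + 1 < j) :
    lkAct t q m i j f = f m j := by
  rw [lkAct, if_neg (by omega), if_neg (by omega), if_neg (by omega), if_pos hi.symm, hi,
    Nat.add_sub_cancel]

theorem lkAct_of_eq_succ_right (hi : i < m) (hj : j = m + 1) :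
    lkAct t q m i j f = f i m := by
  rw [lkAct, if_neg (by omega), if_neg (by omega), if_neg (by omega), if_neg (by omega),
    if_pos hj.symm, hj, Nat.add_sub_cancel]

theorem lkAct_of_disjoint (hi : i < m ∨ m + 1 < i) (hj : j < m ∨ m + 1 < j) :
    lkAct t q m i j f = f i j := by
  rw [lkAct, if_neg (by omega), if_neg (by omega), if_neg (by omega), if_neg (by omega),
    if_neg (by omega)]

end lkAct

section lkForm

variable {R : Type*} [CommRing R] (t q : R) {i j k l : ℕ}

theorem lkForm_of_eq (h : i = k ∧ j = l) :
    lkForm t q i j k l = (q * t - 1) * (1 + q ^ 2 * t) := if_pos h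

theorem lkForm_of_common_endpoint_of_lt (h : (i = k ∧ j < l) ∨ (i < k ∧ j = l)) :
    lkForm t q i j k l = q - 1 := by
  rw [lkForm, if_neg (by omega), if_pos h]

theorem lkForm_of_common_endpoint_of_gt (h : (i = k ∧ l < j) ∨ (k < i ∧ j = l)) :
    lkForm t q i j k l = q ^ 2 * t ^ 2 * (q - 1) := by
  rw [lkForm, if_neg (by omega), if_neg (by omega), if_pos h]

theorem lkForm_of_right_eq_left (h : i < j ∧ j = k ∧ k < l) :
    lkForm t q i j k l = -(q ^ 2 * t * (q - 1)) := by
  rw [lkForm, if_neg (by omega), if_neg (by omega), if_neg (by omega), if_pos h.2.1]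

theorem lkForm_of_left_eq_right (h : k < l ∧ l = i ∧ i < j) :
    lkForm t q i j k l = -(t * (q - 1)) := by
  rw [lkForm, if_neg (by omega), if_neg (by omega), if_neg (by omega), if_neg (by omega),
    if_pos h.2.1.symm]

theorem lkForm_of_crossing_of_lt (h : i < k ∧ k < j ∧ j < l) :
    lkForm t q i j k l = -((q - 1) ^ 2 * (1 + q * t)) := by
  rw [lkForm, if_neg (by omega), if_neg (by omega), if_neg (by omega), if_neg (by omega),
    if_neg (by omega), if_pos h]

theorem lkForm_of_crossing_of_gt (h : k < i ∧ i < l ∧ l < j) :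
    lkForm t q i j k l = t * (q - 1) ^ 2 * (1 + q * t) := by
  rw [lkForm, if_neg (by omega), if_neg (by omega), if_neg (by omega), if_neg (by omega),
    if_neg (by omega), if_neg (by omega), if_pos h]

theorem lkForm_of_noncrossing (hij : i < j) (hkl : k < l)
    (h : j < k ∨ l < i ∨ (i < k ∧ l < j) ∨ (k < i ∧ j < l)) :
    lkForm t q i j k l = 0 := by
  rw [lkForm, if_neg (by omega), if_neg (by omega), if_neg (by omega), if_neg (by omega),
    if_neg (by omega), if_neg (by omega), if_neg (by omega)]

end lkForm

set_option maxHeartbeats 4000000 in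
theorem lkAct_lkForm {F : Type*} [Field F] {t q : F} (ht : t ≠ 0) (hq : q ≠ 0)
    {m i j k l : ℕ} (hij : i < j) (hkl : k < l) :
    lkAct t q m i j (fun a b => lkAct t⁻¹ q⁻¹ m k l (lkForm t q a b)) = lkForm t q i j k l := by
  have position {a b : ℕ} (hab : a < b) :
      ((a < m ∨ m + 1 < a) ∧ (b < m ∨ m + 1 < b)) ∨ (a = m ∧ b = m + 1) ∨
      (a = m ∧ m + 1 < b) ∨ (a < m ∧ b = m) ∨ (a = m + 1 ∧ m + 1 < b) ∨
      (a < m ∧ b = m + 1) := by omega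
  have order : (i = k ∧ j = l) ∨ ((i = k ∧ j < l) ∨ (i < k ∧ j = l)) ∨
      ((i = k ∧ l < j) ∨ (k < i ∧ j = l)) ∨ (i < j ∧ j = k ∧ k < l) ∨ (k < l ∧ l = i ∧ i < j) ∨
      (i < k ∧ k < j ∧ j < l) ∨ (k < i ∧ i < l ∧ l < j) ∨
      (j < k ∨ l < i ∨ (i < k ∧ l < j) ∨ (k < i ∧ j < l)) := by omega
  rcases position hij with hr | hr | hr | hr | hr | hr <;>
    rcases position hkl with hc | hc | hc | hc | hc | hc <;> clear position
  all_goals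
    simp (disch := omega) only [lkAct_of_eq_of_eq, lkAct_of_eq_left, lkAct_of_eq_right,
      lkAct_of_eq_succ_left, lkAct_of_eq_succ_right, lkAct_of_disjoint]
  all_goals
    rcases order with h | (h | h) | (h | h) | h | h | h | h | h | h | h | h <;> first | omega | skip
  all_goals
    simp (disch := omega) only [lkForm_of_eq, lkForm_of_common_endpoint_of_lt,
      lkForm_of_common_endpoint_of_gt, lkForm_of_right_eq_left, lkForm_of_left_eq_right,
      lkForm_of_crossing_of_lt, lkForm_of_crossing_of_gt, lkForm_of_noncrossing]
  all_goals
    try (field_simp; try ring)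

theorem sum_ee_mul {R : Type*} [CommRing R] {n a b : ℕ} (ha : 0 < a) (hab : a < b) (hb : b ≤ n)
    (f : ℕ → ℕ → R) : ∑ c : BP n, ee n a b c * f c.val.1 c.val.2 = f a b := by
  rw [Finset.sum_eq_single
    (⟨(⟨a, by omega⟩, ⟨b, by omega⟩), ha, hab⟩ : BP n)]
  · simp [ee]
  · intro c _ hc
    rw [ee, if_neg, zero_mul]
    rintro ⟨h, h'⟩
    exact hc (Subtype.ext (Prod.ext (Fin.ext h) (Fin.ext h')))
  · simp

theorem sum_LKgen_mul {R : Type*} [CommRing R] (t q : R) {n m : ℕ} (hm : 0 < m) (hmn : m < n)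
    (r : BP n) (f : ℕ → ℕ → R) :
    ∑ c : BP n, LKgen t q n m r c * f c.val.1 c.val.2 = lkAct t q m r.val.1 r.val.2 f := by
  obtain ⟨⟨⟨i, hi⟩, ⟨j, hj⟩⟩, hi0, hij⟩ := r
  simp only at hi0 hij
  simp only [LKgen, lkAct]
  split_ifs <;>
    simp (disch := omega) only [add_mul, sub_mul, mul_assoc, Finset.sum_add_distrib,
      Finset.sum_sub_distrib, neg_mul, Finset.sum_neg_distrib, ← Finset.mul_sum, sum_ee_mul, one_mul]

theorem map_LKgen {R S : Type*} [CommRing R] [CommRing S] (φ : R →+* S) (t q : R) (n m : ℕ) :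
    (LKgen t q n m).map φ = LKgen (φ t) (φ q) n m := by
  have map_ee (a b : ℕ) (c : BP n) : φ (ee n a b c) = ee n a b c := by
    simp only [ee]; split_ifs <;> simp
  ext r c
  simp only [LKgen, Matrix.map_apply]
  split_ifs <;> simp [map_ee]

/-- The Gram matrix of the invariant form. -/
def lkGram {R : Type*} [CommRing R] (t q : R) (n : ℕ) : Matrix (BP n) (BP n) R :=
  fun r c => lkForm t q r.val.1 r.val.2 c.val.1 c.val.2

theorem LKgen_mul_lkGram_mul {F : Type*} [Field F] {t q : F} (ht : t ≠ 0) (hq : q ≠ 0)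
    {n m : ℕ} (hm : 0 < m) (hmn : m < n) :
    LKgen t q n m * lkGram t q n * (LKgen t⁻¹ q⁻¹ n m)ᵀ = lkGram t q n := by
  ext r c
  rw [Matrix.mul_assoc, Matrix.mul_apply]
  have inner (y : BP n) : (lkGram t q n * (LKgen t⁻¹ q⁻¹ n m)ᵀ) y c =
      lkAct t⁻¹ q⁻¹ m c.val.1 c.val.2 (lkForm t q y.val.1 y.val.2) := by
    rw [← sum_LKgen_mul _ _ hm hmn, Matrix.mul_apply]
    exact Finset.sum_congr rfl fun x _ => mul_comm _ _
  simp only [inner]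
  rw [sum_LKgen_mul t q hm hmn r
    (fun a b => lkAct t⁻¹ q⁻¹ m c.val.1 c.val.2 (lkForm t q a b))]
  exact lkAct_lkForm ht hq r.2.2 c.2.2

theorem map_lkForm {R S : Type*} [CommRing R] [CommRing S] (φ : R →+* S) (t q : R)
    (i j k l : ℕ) : φ (lkForm t q i j k l) = lkForm (φ t) (φ q) i j k l := by
  simp only [lkForm]
  split_ifs <;> simp

theorem map_lkGram {R S : Type*} [CommRing R] [CommRing S] (φ : R →+* S) (t q : R) (n : ℕ) :
    φ.mapMatrix (lkGram t q n) = lkGram (φ t) (φ q) n := by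
  ext r c
  exact map_lkForm φ t q _ _ _ _

theorem lkGram_one_right {R : Type*} [CommRing R] (t : R) (n : ℕ) :
    lkGram t 1 n = Matrix.diagonal fun _ => (t - 1) * (1 + t) := by
  ext r c
  rw [Matrix.diagonal_apply]
  by_cases h : r = c
  · simp [lkGram, lkForm, h]
  · have h' : ¬((r.val.1 : ℕ) = c.val.1 ∧ (r.val.2 : ℕ) = c.val.2) := fun h' =>
      h (Subtype.ext (Prod.ext (Fin.ext h'.1) (Fin.ext h'.2)))
    simp [lkGram, lkForm, h, h']

theorem det_lkGram_ne_zero (n : ℕ) : (lkGram tt qq n).det ≠ 0 := by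
  rw [tt, qq, ← map_lkGram, ← RingHom.map_det]
  refine (map_ne_zero_iff _ (IsFractionRing.injective (MvPolynomial (Fin 2) ℚ) F2)).2 fun h => ?_
  have h' := congrArg (MvPolynomial.eval ![(2 : ℚ), 1]) h
  rw [RingHom.map_det, map_lkGram, map_zero] at h'
  simp only [MvPolynomial.eval_X, Matrix.cons_val_zero, Matrix.cons_val_one, lkGram_one_right,
    Matrix.det_diagonal] at h'
  exact Finset.prod_ne_zero_iff.2 (fun _ _ => by norm_num) h'

theorem lkForm_mem {R : Type*} [CommRing R] (S : Subring R) {t q : R} (ht : t ∈ S) (hq : q ∈ S)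
    (i j k l : ℕ) : lkForm t q i j k l ∈ S := by
  have h := map_lkForm S.subtype ⟨t, ht⟩ ⟨q, hq⟩ i j k l
  exact h ▸ SetLike.coe_mem (lkForm (⟨t, ht⟩ : S) ⟨q, hq⟩ i j k l)

/-- The subgroup of invertible matrices preserving a sesquilinear form. -/
def formStabilizer {ι R : Type*} [Fintype ι] [DecidableEq ι] [CommRing R] (conj : R →+* R)
    (J : Matrix ι ι R) : Subgroup (GL ι R) where
  carrier := {g | (g : Matrix ι ι R) * J * ((g : Matrix ι ι R).map conj)ᵀ = J}
  one_mem' := by simp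
  mul_mem' {a b} ha hb := by
    simp only [Set.mem_ofPred_eq, Units.val_mul, Matrix.map_mul, Matrix.transpose_mul] at ha hb ⊢
    rw [← Matrix.mul_assoc, Matrix.mul_assoc (a : Matrix ι ι R) b J,
      Matrix.mul_assoc (a : Matrix ι ι R), hb, ha]
  inv_mem' {a} ha := by
    simp only [Set.mem_ofPred_eq] at ha ⊢
    have h : ((a : Matrix ι ι R).map conj)ᵀ * (((a⁻¹ : GL ι R) : Matrix ι ι R).map conj)ᵀ = 1 := by
      rw [← Matrix.transpose_mul, ← Matrix.map_mul, Units.inv_mul]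
      simp
    conv_lhs => rw [← ha]
    rw [Matrix.mul_assoc (a : Matrix ι ι R), ← Matrix.mul_assoc, Units.inv_mul, Matrix.one_mul,
      Matrix.mul_assoc, h, Matrix.mul_one]

/-- **unitarity of the Lawrence–Krammer representation.**
There is a non-singular matrix `J` over `ℤ[t^{±1}, q^{±1}]` such that every
Lawrence–Krammer matrix `M = K(β)` satisfies `M J M* = J`, where `M*` is the transpose
of `M` with `t, q` replaced by their inverses. -/
theorem lk_unitary (n : ℕ) (K : Braid n →* GL (BP n) F2)
    (hK : ∀ m : Fin (n - 1),
      (K (σg m) : Matrix (BP n) (BP n) F2) = LKgen tt qq n ((m : ℕ) + 1))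
    (conj : F2 →+* F2) (hct : conj tt = tt⁻¹) (hcq : conj qq = qq⁻¹) :
    ∃ J : Matrix (BP n) (BP n) F2,
      (∀ r c, J r c ∈ Subring.closure {tt, tt⁻¹, qq, qq⁻¹}) ∧
      J.det ≠ 0 ∧
      ∀ β : Braid n,
        (K β : Matrix (BP n) (BP n) F2) * J * ((K β : Matrix (BP n) (BP n) F2).map conj)ᵀ
          = J := by
  refine ⟨lkGram tt qq n, fun r c => ?_, det_lkGram_ne_zero n, fun β => ?_⟩
  · exact lkForm_mem _ (Subring.subset_closure (by simp)) (Subring.subset_closure (by simp)) _ _ _ _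
  · have ht : tt ≠ 0 := fun h => MvPolynomial.X_ne_zero (R := ℚ) (0 : Fin 2)
      (IsFractionRing.injective _ F2 (h.trans (map_zero _).symm))
    have hq : qq ≠ 0 := fun h => MvPolynomial.X_ne_zero (R := ℚ) (1 : Fin 2)
      (IsFractionRing.injective _ F2 (h.trans (map_zero _).symm))
    have hβ : β ∈ (formStabilizer conj (lkGram tt qq n)).comap K := by
      have hle : Subgroup.closure (Set.range (PresentedGroup.of (rels := braidRels n))) ≤
          (formStabilizer conj (lkGram tt qq n)).comap K := by
        rw [Subgroup.closure_le]
        rintro _ ⟨m, rfl⟩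
        change (K (σg m) : Matrix (BP n) (BP n) F2) * lkGram tt qq n *
          ((K (σg m) : Matrix (BP n) (BP n) F2).map conj)ᵀ = lkGram tt qq n
        rw [hK, map_LKgen, hct, hcq]
        exact LKgen_mul_lkGram_mul ht hq (by omega) (by omega)
      exact hle (by rw [PresentedGroup.closure_range_of]; trivial)
    exact hβ
end
end

section
/- There exists an invertible n(n−1)/2 × n(n−1)/2 matrix R over ℤ[t^{±1}, q^{±1}] such that for every n-braid β, K(β^{−1})(t,q) = R^{−1} K(β^rev)(t^{−1}, q^{−1}) R. -/
open Matrix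

noncomputable section

section LawrenceKrammer

variable {F : Type*} [Field F]

/-- Dependence of the entry `R_{(i,j),(k,l)}` on the left endpoints `i`, `k`. -/
def leftCoeff (q : F) (i k : ℕ) : F := if k = i then 1 else if i < k then 1 - q⁻¹ else 0

/-- Dependence of the entry `R_{(i,j),(k,l)}` on the right endpoints `j`, `l`. -/
def rightCoeff (q : F) (j l : ℕ) : F := if l = j then 1 else if l < j then 1 - q else 0

/-- The entry `R_{(i,j),(k,l)}` of the intertwining matrix. -/
def intertwinerEntry (q : F) (i j k l : ℕ) : F :=
  q ^ (k + l) * leftCoeff q i k * rightCoeff q j l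

/-- The matrix intertwining the Lawrence–Krammer representation with its bar-conjugate. -/
def intertwiner (q : F) (n : ℕ) : Matrix (BP n) (BP n) F :=
  fun r c => intertwinerEntry q r.val.1 r.val.2 c.val.1 c.val.2

/-- Closed form of the entries of `intertwiner q n * LKgen t q n m`. -/
def intertwinerMulEntry (t q : F) (m i j k l : ℕ) : F :=
  if k = m ∧ l = m + 1 then
    -(t * q ^ 2) * intertwinerEntry q i j m (m + 1)
      + t * q * (1 - q) * (q ^ m * leftCoeff q i m * if m + 2 ≤ j then q ^ (m + 2) else 0)
      - (1 - q) * (q ^ m * rightCoeff q j m * if i < m then q ^ m else 0)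
  else if k = m then
    (1 - q) * intertwinerEntry q i j m l + intertwinerEntry q i j (m + 1) l
  else if k = m + 1 then q * intertwinerEntry q i j m l
  else if l = m then
    (1 - q) * intertwinerEntry q i j k m + intertwinerEntry q i j k (m + 1)
  else if l = m + 1 then q * intertwinerEntry q i j k m
  else intertwinerEntry q i j k l

lemma sum_leftCoeff (q : F) (hq : q ≠ 0) (i m : ℕ) :
    ∑ a ∈ Finset.range m, q ^ (a + 1) * leftCoeff q i a = if i < m then q ^ m else 0 := by
  induction m with
  | zero => simp
  | succ m ih =>
    rw [Finset.sum_range_succ, ih]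
    unfold leftCoeff
    split_ifs <;> first | omega | (field_simp; ring)

lemma sum_rightCoeff_aux (q : F) (p j N : ℕ) :
    ∑ b ∈ Finset.range N, (if p ≤ b then q ^ b * rightCoeff q j b else 0) =
      if p ≤ j ∧ p < N then (if j < N then q ^ p else q ^ p - q ^ N) else 0 := by
  induction N with
  | zero => simp
  | succ N ih =>
    rw [Finset.sum_range_succ, ih]
    unfold rightCoeff
    rcases lt_trichotomy p N with h | rfl | h <;>
    split_ifs <;> first | omega | ring

lemma sum_rightCoeff (q : F) {p j N : ℕ} (hj : j < N) :
    ∑ b ∈ Finset.range N, (if p ≤ b then q ^ b * rightCoeff q j b else 0) =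
      if p ≤ j then q ^ p else 0 := by
  rw [sum_rightCoeff_aux]
  split_ifs <;> first | omega | rfl

lemma sum_BP (n : ℕ) (g : ℕ → ℕ → F) :
    ∑ d : BP n, g d.val.1 d.val.2 =
      ∑ a ∈ Finset.range (n + 1), ∑ b ∈ Finset.range (n + 1),
        if 0 < a ∧ a < b then g a b else 0 := by
  rw [← Fin.sum_univ_eq_sum_range (fun a => ∑ b ∈ Finset.range (n + 1),
        if 0 < a ∧ a < b then g a b else 0)]
  simp_rw [← Fin.sum_univ_eq_sum_range (fun b => if 0 < _ ∧ _ < b then g _ b else 0)]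
  rw [← Fintype.sum_prod_type'
    (f := fun a b : Fin (n + 1) => if 0 < (a : ℕ) ∧ (a : ℕ) < (b : ℕ) then g a b else 0),
    ← Finset.sum_filter]
  exact (Finset.sum_subtype _ (by simp) (fun p : Fin (n + 1) × Fin (n + 1) => g p.1 p.2)).symm

lemma sum_BP_indicator {n a b : ℕ} (ha : 0 < a) (hab : a < b) (hb : b ≤ n) (g : ℕ → ℕ → F) :
    ∑ d : BP n, (if (d.val.1 : ℕ) = a ∧ (d.val.2 : ℕ) = b then g d.val.1 d.val.2 else 0) =
      g a b := by
  rw [Finset.sum_eq_single_of_mem (⟨(⟨a, by omega⟩, ⟨b, by omega⟩), ha, hab⟩ : BP n)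
    (Finset.mem_univ _)]
  · simp
  · rintro ⟨⟨x, y⟩, h⟩ - hne
    rw [if_neg]
    rintro ⟨rfl, rfl⟩
    exact hne rfl

lemma sum_ee_mul_s10 {n a b : ℕ} (ha : 0 < a) (hab : a < b) (hb : b ≤ n) (g : ℕ → ℕ → F) :
    ∑ d : BP n, ee n a b d * g d.val.1 d.val.2 = g a b := by
  simp_rw [ee, ite_mul, one_mul, zero_mul]
  exact sum_BP_indicator ha hab hb g

lemma sum_LKgen_mul_s10 (t q : F) {n m : ℕ} (hm : 0 < m) (hmn : m < n) (r : BP n)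
    (g : ℕ → ℕ → F) {i j : ℕ} (hi : (r.val.1 : ℕ) = i) (hj : (r.val.2 : ℕ) = j) :
    ∑ d : BP n, LKgen t q n m r d * g d.val.1 d.val.2 =
      if m = i ∧ j = i + 1 then -(t * q ^ 2) * g i j
      else if m = i then q * g (i + 1) j + (1 - q) * g i j + t * q * (1 - q) * g i (i + 1)
      else if m = j then q * g i (j + 1) + (1 - q) * g i j - q * (1 - q) * g j (j + 1)
      else if m + 1 = i then g (i - 1) j
      else if m + 1 = j then g i (j - 1)
      else g i j := by
  have h0 := r.2.1
  have h1 := r.2.2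
  have h2 := r.val.2.isLt
  rw [hi, hj] at h1
  rw [hi] at h0
  rw [hj] at h2
  simp only [LKgen, hi, hj]
  split_ifs <;>
  (try simp only [add_mul, sub_mul, mul_assoc, Finset.sum_add_distrib, Finset.sum_sub_distrib,
    ← Finset.mul_sum]) <;>
  repeat rw [sum_ee_mul_s10 (by omega) (by omega) (by omega)]

lemma sum_BP_row (q : F) {n m i j : ℕ} (hm : 0 < m) (hmn : m ≤ n) (hj : j ≤ n) :
    ∑ d : BP n, (if (d.val.1 : ℕ) = m ∧ m + 2 ≤ (d.val.2 : ℕ) then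
        intertwinerEntry q i j d.val.1 d.val.2 else 0) =
      q ^ m * leftCoeff q i m * if m + 2 ≤ j then q ^ (m + 2) else 0 := by
  rw [sum_BP n fun a b => if a = m ∧ m + 2 ≤ b then intertwinerEntry q i j a b else 0,
    Finset.sum_eq_single_of_mem m (by simp; omega), ← sum_rightCoeff q (by omega : j < n + 1),
    Finset.mul_sum]
  · refine Finset.sum_congr rfl fun b _ => ?_
    unfold intertwinerEntry
    split_ifs <;> first | omega | ring
  · intro a _ ha
    simp [ha]

lemma sum_BP_column (q : F) (hq : q ≠ 0) {n m i j : ℕ} (hmn : m ≤ n) (hi : 0 < i) :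
    ∑ d : BP n, (if (d.val.2 : ℕ) = m then
        q * intertwinerEntry q i j d.val.1 d.val.2 else 0) =
      q ^ m * rightCoeff q j m * if i < m then q ^ m else 0 := by
  rw [sum_BP n fun a b => if b = m then q * intertwinerEntry q i j a b else 0,
    Finset.sum_comm, Finset.sum_eq_single_of_mem m (by simp; omega),
    ← sum_leftCoeff q hq, Finset.mul_sum]
  · rw [← Finset.sum_subset (Finset.range_subset_range.2 (by omega : m ≤ n + 1))]
    · refine Finset.sum_congr rfl fun a ha => ?_
      rw [Finset.mem_range] at ha
      unfold intertwinerEntry leftCoeff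
      split_ifs <;> first | omega | ring
    · intro a _ ha
      rw [Finset.mem_range] at ha
      rw [if_neg (by omega)]
  · intro b _ hb
    simp [hb]

/-- The entries of `LKgen` as a function of natural number indices. -/
def LKgenEntry (t q : F) (m i j k l : ℕ) : F :=
  if m = i ∧ j = i + 1 then -(t * q ^ 2) * (if k = i ∧ l = j then 1 else 0)
  else if m = i then
    q * (if k = i + 1 ∧ l = j then 1 else 0) + (1 - q) * (if k = i ∧ l = j then 1 else 0)
      + t * q * (1 - q) * (if k = i ∧ l = i + 1 then 1 else 0)
  else if m = j then
    q * (if k = i ∧ l = j + 1 then 1 else 0) + (1 - q) * (if k = i ∧ l = j then 1 else 0)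
      - q * (1 - q) * (if k = j ∧ l = j + 1 then 1 else 0)
  else if m + 1 = i then (if k = i - 1 ∧ l = j then 1 else 0)
  else if m + 1 = j then (if k = i ∧ l = j - 1 then 1 else 0)
  else (if k = i ∧ l = j then 1 else 0)

set_option maxHeartbeats 4000000 in
lemma sum_mul_LKgen (t q : F) {n m : ℕ} (hq : q ≠ 0) (hm : 0 < m) (hmn : m < n)
    {i j : ℕ} (hi : 0 < i) (hj : j ≤ n) (c : BP n) :
    ∑ d : BP n, intertwinerEntry q i j d.val.1 d.val.2 * LKgen t q n m d c =
      intertwinerMulEntry t q m i j c.val.1 c.val.2 := by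
  have hk0 := c.2.1
  have hkl := c.2.2
  have hl := c.val.2.isLt
  have hM : ∀ d : BP n, LKgen t q n m d c =
      LKgenEntry t q m d.val.1 d.val.2 c.val.1 c.val.2 := fun d => rfl
  simp_rw [hM]
  generalize (c.val.1 : ℕ) = k at *
  generalize (c.val.2 : ℕ) = l at *
  clear hM
  unfold intertwinerMulEntry
  have hind : ∀ (x : F) (a b : ℕ), 0 < a → a < b → b ≤ n →
      ∑ d : BP n, (if (d.val.1 : ℕ) = a ∧ (d.val.2 : ℕ) = b then
        x * intertwinerEntry q i j d.val.1 d.val.2 else 0) = x * intertwinerEntry q i j a b :=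
    fun x a b ha hab hb => sum_BP_indicator ha hab hb fun a b => x * intertwinerEntry q i j a b
  have hdist : ∀ d : BP n, (d.val.1 : ℕ) < d.val.2 := fun d => d.2.2
  by_cases h₁ : k = m ∧ l = m + 1
  · rw [if_pos h₁]
    obtain ⟨rfl, rfl⟩ := h₁
    rw [← hind _ k (k + 1) hk0 hkl (by omega), ← sum_BP_row (n := n) q hk0 (by omega) hj,
      ← sum_BP_column (n := n) (m := k) q hq (by omega) hi, Finset.mul_sum, Finset.mul_sum,
      ← Finset.sum_add_distrib, ← Finset.sum_sub_distrib]
    refine Finset.sum_congr rfl fun d _ => ?_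
    have hd := hdist d
    simp only [LKgenEntry]
    repeat' (split <;> try omega)
    all_goals ring
  rw [if_neg h₁]
  split_ifs
  · rw [← hind _ m l hm (by omega) (by omega), ← one_mul (intertwinerEntry q i j (m + 1) l),
      ← hind _ (m + 1) l (by omega) (by omega) (by omega), ← Finset.sum_add_distrib]
    refine Finset.sum_congr rfl fun d _ => ?_
    have hd := hdist d
    simp only [LKgenEntry]
    repeat' (split <;> try omega)
    all_goals ring
  · rw [← hind _ m l hm (by omega) (by omega)]
    refine Finset.sum_congr rfl fun d _ => ?_
    have hd := hdist d
    simp only [LKgenEntry]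
    repeat' (split <;> try omega)
    all_goals ring
  · rw [← hind _ k m hk0 (by omega) (by omega), ← one_mul (intertwinerEntry q i j k (m + 1)),
      ← hind _ k (m + 1) (by omega) (by omega) (by omega), ← Finset.sum_add_distrib]
    refine Finset.sum_congr rfl fun d _ => ?_
    have hd := hdist d
    simp only [LKgenEntry]
    repeat' (split <;> try omega)
    all_goals ring
  · rw [← hind _ k m hk0 (by omega) (by omega)]
    refine Finset.sum_congr rfl fun d _ => ?_
    have hd := hdist d
    simp only [LKgenEntry]
    repeat' (split <;> try omega)
    all_goals ring
  · rw [← one_mul (intertwinerEntry q i j k l), ← hind _ k l hk0 (by omega) (by omega)]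
    refine Finset.sum_congr rfl fun d _ => ?_
    have hd := hdist d
    simp only [LKgenEntry]
    repeat' (split <;> try omega)
    all_goals ring

set_option maxHeartbeats 4000000 in
lemma intertwinerMulEntry_identity {t q : F} (ht : t ≠ 0) (hq : q ≠ 0) {m i j k l : ℕ}
    (hi : 0 < i) (hij : i < j) (hkl : k < l) :
    (if m = i ∧ j = i + 1 then -(t⁻¹ * q⁻¹ ^ 2) * intertwinerMulEntry t q m i j k l
      else if m = i then
        q⁻¹ * intertwinerMulEntry t q m (i + 1) j k l
          + (1 - q⁻¹) * intertwinerMulEntry t q m i j k l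
          + t⁻¹ * q⁻¹ * (1 - q⁻¹) * intertwinerMulEntry t q m i (i + 1) k l
      else if m = j then
        q⁻¹ * intertwinerMulEntry t q m i (j + 1) k l
          + (1 - q⁻¹) * intertwinerMulEntry t q m i j k l
          - q⁻¹ * (1 - q⁻¹) * intertwinerMulEntry t q m j (j + 1) k l
      else if m + 1 = i then intertwinerMulEntry t q m (i - 1) j k l
      else if m + 1 = j then intertwinerMulEntry t q m i (j - 1) k l
      else intertwinerMulEntry t q m i j k l) = intertwinerEntry q i j k l := by
  by_cases h₁ : k = m ∧ l = m + 1
  · obtain ⟨rfl, rfl⟩ := h₁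
    simp only [intertwinerMulEntry, and_self, if_true, intertwinerEntry, leftCoeff, rightCoeff]
    repeat' (split <;> try omega)
    all_goals (field_simp; ring)
  simp only [intertwinerMulEntry, if_neg h₁, intertwinerEntry]
  by_cases h₂ : k = m
  · subst h₂
    simp only [if_true, leftCoeff, rightCoeff]
    repeat' (split <;> try omega)
    all_goals (field_simp; ring)
  simp only [if_neg h₂]
  by_cases h₃ : k = m + 1
  · subst h₃
    simp only [if_true, leftCoeff, rightCoeff]
    repeat' (split <;> try omega)
    all_goals (field_simp; ring)
  simp only [if_neg h₃]
  by_cases h₄ : l = m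
  · subst h₄
    simp only [if_true, leftCoeff, rightCoeff]
    repeat' (split <;> try omega)
    all_goals (field_simp; ring)
  simp only [if_neg h₄]
  by_cases h₅ : l = m + 1
  · subst h₅
    simp only [if_true, leftCoeff, rightCoeff]
    repeat' (split <;> try omega)
    all_goals (field_simp; ring)
  simp only [if_neg h₅, leftCoeff, rightCoeff]
  repeat' (split <;> try omega)
  all_goals field_simp <;> ring

lemma intertwiner_identity (t q : F) (ht : t ≠ 0) (hq : q ≠ 0) {n m : ℕ} (hm : 0 < m)
    (hmn : m < n) :
    LKgen t⁻¹ q⁻¹ n m * intertwiner q n * LKgen t q n m = intertwiner q n := by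
  ext r c
  rw [Matrix.mul_assoc, Matrix.mul_apply]
  have h : ∀ d, (intertwiner q n * LKgen t q n m) d c =
      intertwinerMulEntry t q m d.val.1 d.val.2 c.val.1 c.val.2 := fun d => by
    rw [Matrix.mul_apply]
    exact sum_mul_LKgen t q hq hm hmn d.2.1 (by omega) c
  simp_rw [h]
  rw [sum_LKgen_mul_s10 _ _ hm hmn r
    (fun i j => intertwinerMulEntry t q m i j c.val.1 c.val.2) rfl rfl]
  unfold intertwiner
  have h0 := r.2.1
  have h1 := r.2.2
  have h2 := c.2.2
  generalize (r.val.1 : ℕ) = i at *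
  generalize (r.val.2 : ℕ) = j at *
  generalize (c.val.1 : ℕ) = k at *
  generalize (c.val.2 : ℕ) = l at *
  clear h
  exact intertwinerMulEntry_identity ht hq h0 h1 h2

lemma det_of_blockTriangular_injective {R ι α : Type*} [CommRing R] [Fintype ι] [DecidableEq ι]
    [LinearOrder α] {M : Matrix ι ι R} {b : ι → α} (hb : Function.Injective b)
    (hM : M.BlockTriangular b) : M.det = ∏ i, M i i := by
  let _ : LinearOrder ι := LinearOrder.lift' b hb
  exact Matrix.det_of_isUpperTriangular fun i j hij => hM hij

lemma intertwiner_det_ne_zero (q : F) (hq : q ≠ 0) (n : ℕ) : (intertwiner q n).det ≠ 0 := by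
  let f : BP n → ℕ ×ₗ ℕᵒᵈ := fun d => toLex ((d.val.1 : ℕ), OrderDual.toDual (d.val.2 : ℕ))
  have hf : Function.Injective f := by
    rintro ⟨⟨a, b⟩, h⟩ ⟨⟨x, y⟩, hxy⟩ hab
    simpa [f, Fin.ext_iff] using hab
  have htri : (intertwiner q n).BlockTriangular f := by
    intro r c hlt
    simp only [f, Prod.Lex.toLex_lt_toLex, OrderDual.toDual_lt_toDual] at hlt
    unfold intertwiner intertwinerEntry leftCoeff rightCoeff
    split_ifs <;> first | omega | simp
  rw [det_of_blockTriangular_injective hf htri, Finset.prod_ne_zero_iff]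
  intro d _
  simp [intertwiner, intertwinerEntry, leftCoeff, rightCoeff, hq]

lemma intertwiner_mem (q : F) (S : Subring F) (hq : q ∈ S) (hq' : q⁻¹ ∈ S) (n : ℕ) (r c : BP n) :
    intertwiner q n r c ∈ S := by
  have hl : leftCoeff q r.val.1 c.val.1 ∈ S := by
    unfold leftCoeff
    split_ifs
    exacts [S.one_mem, S.sub_mem S.one_mem hq', S.zero_mem]
  have hr : rightCoeff q r.val.2 c.val.2 ∈ S := by
    unfold rightCoeff
    split_ifs
    exacts [S.one_mem, S.sub_mem S.one_mem hq, S.zero_mem]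
  exact S.mul_mem (S.mul_mem (S.pow_mem hq _) hl) hr

lemma LKgen_map {R S : Type*} [CommRing R] [CommRing S] (f : R →+* S) (t q : R) (n m : ℕ) :
    (LKgen t q n m).map f = LKgen (f t) (f q) n m := by
  ext r c
  simp only [Matrix.map_apply, LKgen, ee]
  split_ifs <;> simp

end LawrenceKrammer

/-- There is an invertible matrix `R` over `ℤ[t^{±1}, q^{±1}]` such that
for every braid `β`, `K(β⁻¹)(t,q) = R⁻¹ · K(β^rev)(t⁻¹, q⁻¹) · R`, where `β ↦ β^rev` is
the anti-automorphism fixing each Artin generator, and the substitution `t ↦ t⁻¹`,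
`q ↦ q⁻¹` is implemented by the ring homomorphism `conj`. -/
theorem lk_inverse_reverse_conjugate (n : ℕ) (K : Braid n →* GL (BP n) F2)
    (hK : ∀ m : Fin (n - 1),
      (K (σg m) : Matrix (BP n) (BP n) F2) = LKgen tt qq n ((m : ℕ) + 1))
    (conj : F2 →+* F2) (hct : conj tt = tt⁻¹) (hcq : conj qq = qq⁻¹)
    (rev : Braid n →* (Braid n)ᵐᵒᵖ)
    (hrev : ∀ i : Fin (n - 1), rev (σg i) = MulOpposite.op (σg i)) :
    ∃ R : Matrix (BP n) (BP n) F2,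
      (∀ r c, R r c ∈ Subring.closure {tt, tt⁻¹, qq, qq⁻¹}) ∧
      R.det ≠ 0 ∧
      ∀ β : Braid n,
        (K β⁻¹ : Matrix (BP n) (BP n) F2) =
          R⁻¹ * ((K (rev β).unop : Matrix (BP n) (BP n) F2).map conj) * R := by
  have ht : tt ≠ 0 := by simp [tt]
  have hq : qq ≠ 0 := by simp [qq]
  have hdet := intertwiner_det_ne_zero qq hq n
  refine ⟨intertwiner qq n, intertwiner_mem qq _ (Subring.subset_closure (by simp))
    (Subring.subset_closure (by simp)) n, hdet, fun β => ?_⟩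
  let G : GL (BP n) F2 := Matrix.GeneralLinearGroup.mkOfDetNeZero (intertwiner qq n) hdet
  let bar : GL (BP n) F2 →* GL (BP n) F2 := Matrix.GeneralLinearGroup.map conj
  let KG : Braid n →* GL (BP n) F2 := (MulAut.conj G).toMonoidHom.comp K
  let Kbar : Braid n →* GL (BP n) F2 :=
    { toFun := fun β => (bar (K (rev β).unop))⁻¹
      map_one' := by simp
      map_mul' := fun a b => by simp }
  have hgen : KG = Kbar := by
    refine PresentedGroup.ext fun i => ?_
    change G * K (σg i) * G⁻¹ = (bar (K (rev (σg i)).unop))⁻¹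
    rw [hrev, MulOpposite.unop_op, mul_inv_eq_iff_eq_mul, eq_inv_mul_iff_mul_eq]
    refine Units.ext ?_
    change (K (σg i) : Matrix (BP n) (BP n) F2).map conj *
      (intertwiner qq n * (K (σg i) : Matrix (BP n) (BP n) F2)) = intertwiner qq n
    rw [hK, LKgen_map, hct, hcq, ← Matrix.mul_assoc]
    exact intertwiner_identity tt qq ht hq (by omega) (by omega)
  have hβ : G * K β * G⁻¹ = (bar (K (rev β).unop))⁻¹ := DFunLike.congr_fun hgen β
  have hinv : K β⁻¹ = G⁻¹ * bar (K (rev β).unop) * G := by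
    rw [← inv_inv (bar _), ← hβ, map_inv]
    group
  rw [hinv]
  simp only [Units.val_mul, Matrix.coe_units_inv]
  rfl
end
end
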